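/- (Irreducibility of the Fock representation of the Heisenberg algebra.) If U ⊆ S is a nonzero linear subspace with h(n)(U) ⊆ U for every n ∈ ℤ with n ≠ 0, then U = S. -/

import Mathlib

/-!
A nonzero `p ∈ U` that is not constant has a monomial `x^s` with some `s i > 0`; since `ℂ` has
characteristic zero, `∂p/∂x_i` is again nonzero, and it has smaller total degree. As `U` is stable
under all partial derivatives, it therefore contains a nonzero constant, hence `1`
(`one_mem_of_pderiv_stable`). Since `U` is also stable under multiplication by every variable,
it contains all monomials.
-/

/-! Fock space `S = ℂ[x₁,x₂,…]` and the Heisenberg operators `h(n)`. -/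

noncomputable section
open MvPolynomial

/-- The Fock space `S = ℂ[x₁,x₂,x₃,…]`, indexed by positive naturals. -/
abbrev FockS : Type := MvPolynomial ℕ+ ℂ

/-- The Heisenberg operator `h(n)`: multiplication by `x_{-n}` for `n < 0`,
`n·∂/∂x_n` for `n > 0`, and `0` for `n = 0`. -/
def hop (n : ℤ) : Module.End ℂ FockS :=
  if hn : n < 0 then LinearMap.mulLeft ℂ (X (⟨(-n).toNat, by omega⟩ : ℕ+))
  else if hp : 0 < n then (n : ℂ) • (pderiv (⟨n.toNat, by omega⟩ : ℕ+)).toLinearMap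
  else 0

/-- The normally ordered product `:h(j)h(k):`. -/
def nord (j k : ℤ) : Module.End ℂ FockS :=
  if j ≤ k then hop j * hop k else hop k * hop j

end

open MvPolynomial in
theorem totalDegree_pderiv_le_pred {p : FockS} {n : ℕ} (i : ℕ+) (hp : p.totalDegree ≤ n + 1) :
    (pderiv i p).totalDegree ≤ n := by
  refine Finset.sup_le fun m hm => ?_
  rw [mem_support_iff, coeff_pderiv] at hm
  have h := le_totalDegree (mem_support_iff.mpr (left_ne_zero_of_mul hm))
  rw [Finsupp.sum_add_index' (fun _ => rfl) (fun _ _ _ => rfl),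
    Finsupp.sum_single_index rfl] at h
  omega

open MvPolynomial in
/-- A nonconstant polynomial has a nonzero partial derivative: if `x^s` occurs in `p` and
`s i ≠ 0`, then `x^s / x_i` occurs in `∂p/∂x_i` with its coefficient multiplied by `s i`. -/
theorem exists_pderiv_ne_zero {p : FockS} (hp : p.totalDegree ≠ 0) :
    ∃ i, pderiv i p ≠ 0 := by
  have h : ∃ s ∈ p.support, ∃ i, s i ≠ 0 := by
    by_contra! h
    apply hp
    rw [totalDegree_eq_zero_iff]
    exact h
  obtain ⟨s, hs, i, hi⟩ := h
  refine ⟨i, fun h0 => ?_⟩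
  have hc := congrArg (coeff (s - Finsupp.single i 1)) h0
  have hle : Finsupp.single i 1 ≤ s := by
    rw [Finsupp.single_le_iff]; omega
  rw [coeff_pderiv, tsub_add_cancel_of_le hle, coeff_zero] at hc
  have hcast : (((s - Finsupp.single i 1 : ℕ+ →₀ ℕ) i : ℕ) : ℂ) + 1 ≠ 0 := Nat.cast_add_one_ne_zero _
  have := mem_support_iff.mp hs
  simp_all

open MvPolynomial in
theorem one_mem_of_pderiv_stable (U : Submodule ℂ FockS)
    (hd : ∀ i : ℕ+, ∀ p ∈ U, pderiv i p ∈ U) (n : ℕ) :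
    ∀ p ∈ U, p ≠ 0 → p.totalDegree ≤ n → (1 : FockS) ∈ U := by
  have const : ∀ p ∈ U, p ≠ 0 → p.totalDegree = 0 → (1 : FockS) ∈ U := by
    intro p hp h0 hdeg
    rw [totalDegree_eq_zero_iff_eq_C] at hdeg
    have hc : coeff 0 p ≠ 0 := by
      intro h
      rw [h, C_0] at hdeg
      exact h0 hdeg
    have := U.smul_mem (coeff 0 p)⁻¹ hp
    rwa [hdeg, coeff_C, if_pos rfl, smul_eq_C_mul, ← C_mul, inv_mul_cancel₀ hc, C_1] at this
  induction n with
  | zero => exact fun p hp h0 hdeg => const p hp h0 (by omega)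
  | succ n ih =>
    intro p hp h0 hdeg
    by_cases hz : p.totalDegree = 0
    · exact const p hp h0 hz
    · obtain ⟨i, hi⟩ := exists_pderiv_ne_zero hz
      exact ih _ (hd i p hp) hi (totalDegree_pderiv_le_pred i hdeg)

/-- **Statement 10** (Irreducibility of the Fock representation): any nonzero
subspace `U ⊆ S` stable under all `h(n)`, `n ≠ 0`, is all of `S`. -/
theorem fock_irreducible (U : Submodule ℂ FockS) (hU : U ≠ ⊥)
    (hstab : ∀ n : ℤ, n ≠ 0 → ∀ p ∈ U, hop n p ∈ U) : U = ⊤ := by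
  have hX : ∀ i : ℕ+, ∀ p ∈ U, MvPolynomial.X i * p ∈ U := by
    intro i p hp
    have hi := i.pos
    have h := hstab (-(i : ℕ)) (by omega) p hp
    rw [hop, dif_pos (by omega)] at h
    simp only [LinearMap.mulLeft_apply, neg_neg, Int.toNat_natCast] at h
    exact h
  have hd : ∀ i : ℕ+, ∀ p ∈ U, MvPolynomial.pderiv i p ∈ U := by
    intro i p hp
    have hi := i.pos
    have h := hstab (i : ℕ) (by omega) p hp
    rw [hop, dif_neg (by omega), dif_pos (by omega)] at h
    have hne : (((i : ℕ) : ℤ) : ℂ) ≠ 0 := by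
      exact_mod_cast i.ne_zero
    exact (U.smul_mem_iff hne).mp h
  obtain ⟨p, hp, h0⟩ := U.exists_mem_ne_zero_of_ne_bot hU
  have h1 := one_mem_of_pderiv_stable U hd _ p hp h0 le_rfl
  rw [eq_top_iff]
  rintro q -
  induction q using MvPolynomial.induction_on with
  | C a =>
    rw [← mul_one (MvPolynomial.C a), ← MvPolynomial.smul_eq_C_mul]
    exact U.smul_mem a h1
  | add p q hp hq => exact U.add_mem hp hq
  | mul_X p i hp => rw [mul_comm]; exact hX i p hp
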